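/- Let 0 < α < 1, ρ > 0, t₀ > 0. Let d = d₁ + ... + d_n with d_i ≥ 1, and let λ₁, ..., λ_n be complex numbers with |arg λ_i| > απ/2 for all i; set J_i = λ_i · Id_{d_i×d_i}. Let h : ℝ^d → ℝ^d be a locally Lipschitz function with h(0) = 0, and for r > 0 let ℓ_h(r) = sup_{x, y ∈ B(0, r)} ‖h(x) − h(y)‖ / ‖x − y‖. Write ℝ^d = ℝ^{d₁} × ... × ℝ^{d_n} and accordingly h = (h¹, ..., hⁿ). For x = (x¹, ..., xⁿ) ∈ ℝ^d define the Lyapunov–Perron operator F_x on the space C_∞([t₀, ∞), ℝ^d) of bounded continuous functions (with sup norm ‖·‖_∞) componentwise by (F_x ξ)^i(t) = E_α(((t^ρ − t₀^ρ)/ρ)^α J_i) x^i + ∫_{t₀}^t ((t^ρ − s^ρ)/ρ)^{α−1} E_{α,α}(((t^ρ − s^ρ)/ρ)^α J_i) s^{ρ−1} h^i(ξ(s)) ds. Then there exists a constant C(α, λ) > 0, depending only on α and λ = (λ₁, ..., λ_n), such that for all x ∈ ℝ^d and all ξ, ξ̂ ∈ C_∞([t₀, ∞), ℝ^d): ‖F_x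 ξ − F_x ξ̂‖_∞ ≤ C(α, λ) · ℓ_h( max(‖ξ‖_∞, ‖ξ̂‖_∞) ) · ‖ξ − ξ̂‖_∞. -/

import Mathlib

open Real Set MeasureTheory

/-- The two-parameter Mittag-Leffler function `E_{α,β}(z) = ∑_{k=0}^∞ z^k / Γ(kα + β)`. -/
noncomputable def mittagLeffler (α β : ℝ) (z : ℂ) : ℂ :=
  ∑' k : ℕ, z ^ k / (Real.Gamma (k * α + β) : ℂ)

/-- The Lyapunov–Perron operator associated with the block-diagonal linear part
`J = diag(λ₁ Id, ..., λ_n Id)` and the nonlinearity `h`; on the `i`-th block (coordinates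
indexed by `p` with `p.1 = i`) it is
`(F_x ξ)^i(t) = E_α(((t^ρ−t₀^ρ)/ρ)^α J_i) x^i
  + ∫_{t₀}^t ((t^ρ−s^ρ)/ρ)^{α−1} E_{α,α}(((t^ρ−s^ρ)/ρ)^α J_i) s^{ρ−1} h^i(ξ(s)) ds`,
where, since `J_i = λᵢ·Id`, the matrix Mittag-Leffler functions act as the scalars
`E_α(λᵢ ((t^ρ−t₀^ρ)/ρ)^α)` and `E_{α,α}(λᵢ ((t^ρ−s^ρ)/ρ)^α)`. -/
noncomputable def lyapunovPerron (α ρ t₀ : ℝ) {n : ℕ} {d : Fin n → ℕ} (lam : Fin n → ℂ)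
    (h : (((i : Fin n) × Fin (d i)) → ℂ) → (((i : Fin n) × Fin (d i)) → ℂ))
    (x : ((i : Fin n) × Fin (d i)) → ℂ) (ξ : ℝ → ((i : Fin n) × Fin (d i)) → ℂ)
    (t : ℝ) (p : (i : Fin n) × Fin (d i)) : ℂ :=
  mittagLeffler α 1 (lam p.1 * ((((t ^ ρ - t₀ ^ ρ) / ρ) ^ α : ℝ) : ℂ)) * x p
    + ∫ s in t₀..t, ((((t ^ ρ - s ^ ρ) / ρ) ^ (α - 1) : ℝ) : ℂ)
        * mittagLeffler α α (lam p.1 * ((((t ^ ρ - s ^ ρ) / ρ) ^ α : ℝ) : ℂ))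
        * ((s ^ (ρ - 1) : ℝ) : ℂ) * h (ξ s) p

/-- Sup norm `‖ξ‖_∞ = sup_{t ≥ t₀} ‖ξ(t)‖` on `C_∞([t₀,∞), E)`. -/
noncomputable def supNorm {E : Type*} [NormedAddCommGroup E] (t₀ : ℝ) (ξ : ℝ → E) : ℝ :=
  ⨆ t : Set.Ici t₀, ‖ξ t.1‖

/-- `ℓ_h(r) = sup_{x,y ∈ B(0,r)} ‖h(x) − h(y)‖ / ‖x − y‖`. -/
noncomputable def lipQuot {E : Type*} [NormedAddCommGroup E] (h : E → E) (r : ℝ) : ℝ :=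
  ⨆ q : { q : E × E // ‖q.1‖ ≤ r ∧ ‖q.2‖ ≤ r }, ‖h q.1.1 - h q.1.2‖ / ‖q.1.1 - q.1.2‖

/-- The Laplace transform of a power function on the right half-plane. -/
lemma integral_Ioi_cexp_neg_mul_rpow {w : ℝ} (hw : 0 < w) {s : ℂ} (hs : 0 < s.re) :
    ∫ t in Ioi (0 : ℝ), Complex.exp (-s * t) * ((t ^ (w - 1) : ℝ) : ℂ)
      = Real.Gamma w * s ^ (-(w : ℂ)) := by
  set f : ℝ → NNReal := fun t => (t ^ (w - 1)).toNNReal with hf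
  have hfm : Measurable f := by fun_prop
  set μ : Measure ℝ := (volume.restrict (Ioi 0)).withDensity fun t => (f t : ENNReal) with hμ
  have hmgf : ∀ z : ℂ, ProbabilityTheory.complexMGF (fun t : ℝ => -t) μ z
      = ∫ t in Ioi (0 : ℝ), Complex.exp (-z * t) * ((t ^ (w - 1) : ℝ) : ℂ) := by
    intro z
    rw [ProbabilityTheory.complexMGF, hμ, integral_withDensity_eq_integral_smul hfm]
    refine setIntegral_congr_fun measurableSet_Ioi fun t ht => ?_
    have ht' : (0 : ℝ) ≤ t ^ (w - 1) := rpow_nonneg (le_of_lt ht) _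
    simp only [hf, NNReal.smul_def, Real.coe_toNNReal _ ht', Complex.real_smul]
    push_cast
    rw [mul_comm]
    congr 2
    ring
  have hexp : Ioi (0 : ℝ) ⊆ ProbabilityTheory.integrableExpSet (fun t : ℝ => -t) μ := by
    intro b hb
    rw [ProbabilityTheory.integrableExpSet, mem_ofPred_eq, hμ,
      integrable_withDensity_iff_integrable_smul hfm]
    refine (integrableOn_rpow_mul_exp_neg_mul_rpow (p := 1) (s := w - 1) (b := b)
      (by linarith) one_pos hb).congr ?_
    filter_upwards [ae_restrict_mem measurableSet_Ioi] with t ht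
    have ht' : (0 : ℝ) ≤ t ^ (w - 1) := rpow_nonneg (le_of_lt ht) _
    simp [hf, NNReal.smul_def, Real.coe_toNNReal _ ht']
  have hopen : IsOpen {z : ℂ | 0 < z.re} := isOpen_lt continuous_const Complex.continuous_re
  have hdiff : DifferentiableOn ℂ (ProbabilityTheory.complexMGF (fun t : ℝ => -t) μ)
      {z | 0 < z.re} :=
    ProbabilityTheory.differentiableOn_complexMGF.mono fun z hz =>
      interior_mono hexp (by rwa [interior_Ioi])
  have hdiff' : DifferentiableOn ℂ (fun s : ℂ => Real.Gamma w * s ^ (-(w : ℂ)))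
      {z | 0 < z.re} := by
    intro z hz
    exact ((differentiableAt_id.cpow_const (Or.inl hz)).const_mul _).differentiableWithinAt
  have hconv : IsPreconnected {z : ℂ | 0 < z.re} :=
    (convex_halfSpace_re_gt 0).isPreconnected
  rw [← hmgf]
  refine (hdiff.analyticOnNhd hopen).eqOn_of_preconnected_of_frequently_eq
    (hdiff'.analyticOnNhd hopen) hconv (z₀ := 1) (by simp) ?_ hs
  have htend : Filter.Tendsto (fun r : ℝ => (r : ℂ)) (nhdsWithin 1 {1}ᶜ) (nhdsWithin 1 {1}ᶜ) := by
    refine tendsto_nhdsWithin_of_tendsto_nhds_of_eventually_within _ ?_ ?_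
    · exact (Complex.continuous_ofReal.tendsto' 1 1 (by simp)).mono_left nhdsWithin_le_nhds
    · filter_upwards [self_mem_nhdsWithin] with r hr
      simpa using hr
  refine htend.frequently (Filter.Eventually.frequently ?_)
  filter_upwards [nhdsWithin_le_nhds (lt_mem_nhds one_pos)] with r (hr : (0 : ℝ) < r)
  rw [hmgf]
  have h := Real.integral_rpow_mul_exp_neg_mul_Ioi hw hr
  calc ∫ t in Ioi (0 : ℝ), Complex.exp (-(r : ℂ) * t) * ((t ^ (w - 1) : ℝ) : ℂ)
      = ∫ t in Ioi (0 : ℝ), ((t ^ (w - 1) * rexp (-(r * t)) : ℝ) : ℂ) := by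
        refine integral_congr_ae (Filter.Eventually.of_forall fun t => ?_)
        simp only
        push_cast
        rw [mul_comm, neg_mul]
    _ = (((1 / r) ^ w * Real.Gamma w : ℝ) : ℂ) := by rw [integral_complex_ofReal, h]
    _ = _ := by
        rw [one_div, Real.inv_rpow hr.le, ← Real.rpow_neg hr.le]
        push_cast [Complex.ofReal_cpow hr.le]
        ring

lemma norm_ofReal_cpow_neg {s : ℂ} (hs : 0 < s.re) (b : ℝ) :
    ‖s ^ (-(b : ℂ))‖ = ‖s‖ ^ (-b) := by
  rw [Complex.norm_cpow_of_ne_zero (fun h => by simp [h] at hs)]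
  simp

lemma verticalLine_re_pos {σ : ℝ} (hσ : 0 < σ) (y : ℝ) :
    0 < ((σ : ℂ) + y * Complex.I).re := by simpa

lemma le_norm_verticalLine {σ : ℝ} (hσ : 0 < σ) (y : ℝ) :
    σ ≤ ‖(σ : ℂ) + y * Complex.I‖ ∧ |y| ≤ ‖(σ : ℂ) + y * Complex.I‖ := by
  have h1 := Complex.abs_re_le_norm ((σ : ℂ) + y * Complex.I)
  have h2 := Complex.abs_im_le_norm ((σ : ℂ) + y * Complex.I)
  simp only [Complex.add_re, Complex.ofReal_re, Complex.mul_re, Complex.I_re, mul_zero,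
    Complex.ofReal_im, Complex.I_im, mul_one, sub_self, add_zero, Complex.add_im, Complex.mul_im,
    zero_add, abs_of_pos hσ] at h1 h2
  exact ⟨h1, h2⟩

lemma integrable_norm_verticalLine_rpow {σ : ℝ} (hσ : 0 < σ) {b : ℝ} (hb : 1 < b) :
    Integrable fun y : ℝ => ‖(σ : ℂ) + y * Complex.I‖ ^ (-b) := by
  have hc : 0 < min σ 1 / 2 := by positivity
  refine ((integrable_one_add_norm (E := ℝ) (μ := volume) (r := b) (by simpa)).const_mul
    ((min σ 1 / 2) ^ (-b))).mono'
    (Measurable.aestronglyMeasurable (by fun_prop)) (Filter.Eventually.of_forall fun y => ?_)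
  rw [Real.norm_of_nonneg (by positivity), ← Real.mul_rpow hc.le (by positivity)]
  refine Real.rpow_le_rpow_of_nonpos (by positivity) ?_ (by linarith)
  obtain ⟨h1, h2⟩ := le_norm_verticalLine hσ y
  rw [Real.norm_eq_abs]
  nlinarith [min_le_left σ 1, min_le_right σ 1, abs_nonneg y]

lemma continuous_verticalLine_cpow {σ : ℝ} (hσ : 0 < σ) (b : ℂ) :
    Continuous fun y : ℝ => ((σ : ℂ) + y * Complex.I) ^ b :=
  continuous_iff_continuousAt.2 fun y =>
    ContinuousAt.cpow (by fun_prop) continuousAt_const (Or.inl (verticalLine_re_pos hσ y))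

/-- The Bromwich integral of a negative power. -/
lemma integral_verticalLine_cexp_mul_cpow {w : ℝ} (hw : 1 < w) {σ : ℝ} (hσ : 0 < σ)
    {u : ℝ} (hu : 0 < u) :
    ∫ y : ℝ, Complex.exp (((σ : ℂ) + y * Complex.I) * u)
        * ((σ : ℂ) + y * Complex.I) ^ (-(w : ℂ))
      = ((2 * π * (u ^ (w - 1) / Real.Gamma w) : ℝ) : ℂ) := by
  have hΓ : Real.Gamma w ≠ 0 := (Real.Gamma_pos_of_pos (by linarith)).ne'
  set f : ℝ → ℂ := fun t => ((max t 0 ^ (w - 1) * rexp (-(σ * t)) : ℝ) : ℂ) with hf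
  have hfc : Continuous f := by
    refine Complex.continuous_ofReal.comp (Continuous.mul ?_ (by fun_prop))
    exact (Real.continuous_rpow_const (by linarith)).comp (by fun_prop)
  have hzero : ∀ t ∉ Ioi (0 : ℝ), f t = 0 := by
    intro t ht
    rw [hf]
    simp only [mem_Ioi, not_lt] at ht
    simp [max_eq_right ht, Real.zero_rpow (by linarith : w - 1 ≠ 0)]
  have hfi : Integrable f := by
    rw [← integrableOn_iff_integrable_of_support_subset (s := Ioi (0 : ℝ))
      (fun t ht => by_contra fun h => ht (hzero t h))]
    refine ((integrableOn_rpow_mul_exp_neg_mul_rpow (p := 1) (s := w - 1) (b := σ)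
      (by linarith) one_pos hσ).ofReal (𝕜 := ℂ)).congr ?_
    filter_upwards [ae_restrict_mem measurableSet_Ioi] with t (ht : 0 < t)
    simp [hf, max_eq_left ht.le]
  have hF : ∀ y : ℝ, FourierTransform.fourier f y
      = Real.Gamma w * ((σ : ℂ) + (2 * π * y : ℝ) * Complex.I) ^ (-(w : ℂ)) := by
    intro y
    rw [Real.fourier_real_eq_integral_exp_smul,
      ← integral_Ioi_cexp_neg_mul_rpow (by linarith) (verticalLine_re_pos hσ _),
      ← setIntegral_eq_integral_of_forall_compl_eq_zero (s := Ioi (0 : ℝ))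
        (fun t ht => by rw [hzero t ht, smul_zero])]
    refine setIntegral_congr_fun measurableSet_Ioi fun t (ht : 0 < t) => ?_
    simp only [hf, max_eq_left ht.le, smul_eq_mul]
    push_cast
    rw [mul_left_comm, ← Complex.exp_add, mul_comm]
    congr 2
    ring
  have hFi : Integrable (FourierTransform.fourier f) := by
    have h := (integrable_norm_verticalLine_rpow hσ hw).comp_mul_left' (R := 2 * π)
      (by positivity)
    refine (h.const_mul (Real.Gamma w)).mono' ?_ (Filter.Eventually.of_forall fun y => ?_)
    · have : Continuous (FourierTransform.fourier f) := by
        rw [funext hF]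
        exact continuous_const.mul
          ((continuous_verticalLine_cpow hσ _).comp (by fun_prop : Continuous fun y => 2 * π * y))
      exact this.aestronglyMeasurable
    · rw [hF, norm_mul, norm_ofReal_cpow_neg (verticalLine_re_pos hσ _), Complex.norm_real,
        Real.norm_of_nonneg (Real.Gamma_pos_of_pos (by linarith)).le]
  have hinv := hfi.fourierInv_fourier_eq hFi (v := u) hfc.continuousAt
  rw [Real.fourierInv_eq'] at hinv
  have hsub := Measure.integral_comp_mul_left (fun y : ℝ =>
    Complex.exp (((σ : ℂ) + y * Complex.I) * u) * ((σ : ℂ) + y * Complex.I) ^ (-(w : ℂ))) (2 * π)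
  have hpi : |(2 * π)⁻¹| = (2 * π)⁻¹ := abs_of_pos (by positivity)
  rw [hpi] at hsub
  have hfu : f u = ((u ^ (w - 1) * rexp (-(σ * u)) : ℝ) : ℂ) := by
    simp [hf, max_eq_left hu.le]
  have hkey : (∫ y : ℝ, Complex.exp (((σ : ℂ) + (2 * π * y : ℝ) * Complex.I) * u)
      * ((σ : ℂ) + (2 * π * y : ℝ) * Complex.I) ^ (-(w : ℂ)))
      = (rexp (σ * u) / Real.Gamma w : ℝ) * f u := by
    rw [← hinv, ← integral_const_mul]
    refine integral_congr_ae (Filter.Eventually.of_forall fun y => ?_)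
    simp only [hF, smul_eq_mul]
    have : Complex.exp (((σ : ℂ) + (2 * π * y : ℝ) * Complex.I) * u)
        = Complex.exp (((2 * π * inner ℝ y u : ℝ) : ℂ) * Complex.I) * Complex.exp (σ * u) := by
      rw [← Complex.exp_add]
      congr 1
      simp only [RCLike.inner_apply, conj_trivial]
      push_cast
      ring
    rw [this]
    have hΓ' : (Real.Gamma w : ℂ) ≠ 0 := by exact_mod_cast hΓ
    push_cast
    field_simp
  rw [hkey, hfu] at hsub
  have hpi0 : (2 * π : ℝ) ≠ 0 := by positivity
  have : (∫ y : ℝ, Complex.exp (((σ : ℂ) + y * Complex.I) * u)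
      * ((σ : ℂ) + y * Complex.I) ^ (-(w : ℂ)))
      = (2 * π : ℝ) • ((rexp (σ * u) / Real.Gamma w : ℝ)
        * ((u ^ (w - 1) * rexp (-(σ * u)) : ℝ) : ℂ)) := by
    rw [hsub, smul_smul, mul_inv_cancel₀ hpi0, one_smul]
  rw [this, Complex.real_smul, ← Complex.ofReal_mul, ← Complex.ofReal_mul, Real.exp_neg]
  congr 1
  have := Real.exp_ne_zero (σ * u)
  field_simp

lemma hasSum_quadratic_mul_geometric (α : ℝ) {x : ℂ} (hx : ‖x‖ < 1) :
    HasSum (fun k : ℕ => (((k * α + α) * (k * α + α + 1) : ℝ) : ℂ) * x ^ k)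
      (2 * α ^ 2 / (1 - x) ^ 3 + α * (1 - α) / (1 - x) ^ 2) := by
  have h2 := (hasSum_choose_mul_geometric_of_norm_lt_one 2 hx).mul_left (2 * (α : ℂ) ^ 2)
  have h1 := (hasSum_choose_mul_geometric_of_norm_lt_one 1 hx).mul_left ((α : ℂ) * (1 - α))
  convert! h2.add h1 using 1
  · funext k
    rw [Nat.cast_choose_two, Nat.choose_one_right]
    push_cast
    ring
  · ring

/-- The second derivative of `s ↦ (s ^ α - lam)⁻¹`. -/
noncomputable def resolventDerivTwo (α : ℝ) (lam s : ℂ) : ℂ :=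
  s ^ (-((α + 2 : ℝ) : ℂ)) * (2 * α ^ 2 / (1 - lam * s ^ (-(α : ℂ))) ^ 3
    + α * (1 - α) / (1 - lam * s ^ (-(α : ℂ))) ^ 2)

/-- For large abscissa, the Bromwich integral of `resolventDerivTwo` is given by the
Mittag-Leffler series. -/
lemma hasSum_integral_verticalLine_resolventDerivTwo {α : ℝ} (hα : 0 < α) {lam : ℂ} {σ : ℝ}
    (hσ : 0 < σ) (hlam : ‖lam‖ < σ ^ α) {u : ℝ} (hu : 0 < u) :
    HasSum (fun k : ℕ => 2 * π * (u : ℂ) * (u ^ (α : ℝ) : ℝ)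
        * ((lam * (u ^ α : ℝ)) ^ k / (Real.Gamma (k * α + α) : ℂ)))
      (∫ y : ℝ, Complex.exp (((σ : ℂ) + y * Complex.I) * u)
        * resolventDerivTwo α lam ((σ : ℂ) + y * Complex.I)) := by
  set a : ℕ → ℝ := fun k => k * α + α with ha
  have hapos : ∀ k, 0 < a k := fun k => by positivity
  set F : ℕ → ℝ → ℂ := fun k y => lam ^ k * (a k * (a k + 1) : ℝ)
    * (Complex.exp (((σ : ℂ) + y * Complex.I) * u)
      * ((σ : ℂ) + y * Complex.I) ^ (-((a k + 2 : ℝ) : ℂ))) with hF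
  have hσα : 0 < σ ^ α := by positivity
  have hFnorm : ∀ k y, ‖F k y‖ = ‖lam‖ ^ k * (a k * (a k + 1))
      * (rexp (σ * u) * ‖(σ : ℂ) + y * Complex.I‖ ^ (-(a k + 2))) := by
    intro k y
    have := hapos k
    rw [hF]
    simp only [norm_mul, norm_pow, norm_ofReal_cpow_neg (verticalLine_re_pos hσ y),
      Complex.norm_exp, Complex.norm_real]
    rw [Real.norm_of_nonneg (by positivity), Real.norm_of_nonneg (by positivity)]
    simp
  have hFle : ∀ k y, ‖F k y‖ ≤ (rexp (σ * u) * ((a k * (a k + 1)) * (‖lam‖ / σ ^ α) ^ k))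
      * ‖(σ : ℂ) + y * Complex.I‖ ^ (-(α + 2)) := by
    intro k y
    have := hapos k
    have hs : 0 < ‖(σ : ℂ) + y * Complex.I‖ := hσ.trans_le (le_norm_verticalLine hσ y).1
    have h1 : ‖(σ : ℂ) + y * Complex.I‖ ^ (-(a k + 2))
        ≤ (σ ^ α)⁻¹ ^ k * ‖(σ : ℂ) + y * Complex.I‖ ^ (-(α + 2)) := by
      rw [show -(a k + 2) = -(α * k) + (-(α + 2)) by simp only [ha]; ring, Real.rpow_add hs]
      gcongr
      rw [← Real.rpow_neg hσ.le, ← Real.rpow_mul_natCast hσ.le, neg_mul]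
      refine Real.rpow_le_rpow_of_nonpos hσ (le_norm_verticalLine hσ y).1 ?_
      have : 0 ≤ α * k := by positivity
      linarith
    rw [hFnorm]
    calc _ ≤ ‖lam‖ ^ k * (a k * (a k + 1)) * (rexp (σ * u)
          * ((σ ^ α)⁻¹ ^ k * ‖(σ : ℂ) + y * Complex.I‖ ^ (-(α + 2)))) := by gcongr
      _ = _ := by rw [div_eq_mul_inv, mul_pow]; ring
  have hFc : ∀ k, Continuous (F k) := fun k =>
    continuous_const.mul ((by fun_prop : Continuous fun y : ℝ =>
      Complex.exp (((σ : ℂ) + y * Complex.I) * u)).mul (continuous_verticalLine_cpow hσ _))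
  have hint := integrable_norm_verticalLine_rpow hσ (b := α + 2) (by linarith)
  have hFi : ∀ k, Integrable (F k) := fun k =>
    (hint.const_mul _).mono' (hFc k).aestronglyMeasurable (Filter.Eventually.of_forall (hFle k))
  have hq : ‖((‖lam‖ / σ ^ α : ℝ) : ℂ)‖ < 1 := by
    rw [Complex.norm_real, Real.norm_of_nonneg (by positivity), div_lt_one hσα]
    exact hlam
  have hsum : Summable fun k => ∫ y, ‖F k y‖ := by
    have h := ((hasSum_quadratic_mul_geometric α hq).summable.norm.mul_left
      (rexp (σ * u))).mul_right (∫ y : ℝ, ‖(σ : ℂ) + y * Complex.I‖ ^ (-(α + 2)))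
    refine Summable.of_nonneg_of_le (fun k => integral_nonneg fun y => norm_nonneg _)
      (fun k => ?_) h
    have := hapos k
    rw [norm_mul, norm_pow, Complex.norm_real, Complex.norm_real,
      Real.norm_of_nonneg (by positivity), Real.norm_of_nonneg (by positivity),
      ← integral_const_mul]
    exact integral_mono (hFi k).norm (hint.const_mul _) (hFle k)
  have hmain := hasSum_integral_of_summable_integral_norm hFi hsum
  convert! hmain using 1
  · funext k
    have := hapos k
    rw [hF]
    simp only
    rw [integral_const_mul, integral_verticalLine_cexp_mul_cpow (by linarith) hσ hu]
    have hΓ : Real.Gamma (a k + 2) = (a k + 1) * (a k * Real.Gamma (a k)) := by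
      rw [← Real.Gamma_add_one this.ne', ← Real.Gamma_add_one (by positivity)]
      congr 1
      ring
    have hpow : u ^ (a k + 2 - 1) = u * u ^ α * (u ^ α) ^ k := by
      rw [← Real.rpow_mul_natCast hu.le, mul_assoc, ← Real.rpow_add hu,
        ← Real.rpow_one_add' hu.le (by positivity)]
      congr 1
      simp only [ha]
      ring
    have hΓ0 : (Real.Gamma (a k) : ℂ) ≠ 0 := by
      exact_mod_cast (Real.Gamma_pos_of_pos this).ne'
    have h0 : (a k : ℂ) ≠ 0 := by exact_mod_cast this.ne'
    have h1 : (a k : ℂ) + 1 ≠ 0 := by exact_mod_cast (by positivity : a k + 1 ≠ 0)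
    rw [show (k : ℝ) * α + α = a k from rfl, hΓ, hpow]
    push_cast
    simp only [mul_pow]
    field_simp
  · refine integral_congr_ae (Filter.Eventually.of_forall fun y => ?_)
    have hs := verticalLine_re_pos hσ y
    set s : ℂ := (σ : ℂ) + y * Complex.I with hsdef
    have hs0 : s ≠ 0 := fun h => by simp [h] at hs
    have hx : ‖lam * s ^ (-(α : ℂ))‖ < 1 := by
      rw [norm_mul, norm_ofReal_cpow_neg hs]
      calc ‖lam‖ * ‖s‖ ^ (-α) ≤ ‖lam‖ * σ ^ (-α) := by
            exact mul_le_mul_of_nonneg_left (Real.rpow_le_rpow_of_nonpos hσ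
              (le_norm_verticalLine hσ y).1 (neg_nonpos.2 hα.le)) (norm_nonneg _)
        _ < 1 := by rwa [Real.rpow_neg hσ.le, ← div_eq_mul_inv, div_lt_one hσα]
    have h := (hasSum_quadratic_mul_geometric α hx).mul_left
      (Complex.exp (s * u) * s ^ (-((α + 2 : ℝ) : ℂ)))
    simp only [resolventDerivTwo]
    rw [← mul_assoc, ← h.tsum_eq]
    refine tsum_congr fun k => ?_
    rw [hF]
    simp only [← hsdef]
    rw [show -((a k + 2 : ℝ) : ℂ) = -((α + 2 : ℝ) : ℂ) + k * (-(α : ℂ)) by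
      simp only [ha]; push_cast; ring, Complex.cpow_add _ _ hs0, Complex.cpow_nat_mul, mul_pow]
    simp only [ha]
    ring

lemma one_sub_mul_cpow_neg {α : ℝ} {lam s : ℂ} (hs : 0 < s.re) :
    1 - lam * s ^ (-(α : ℂ)) = (s ^ (α : ℂ) - lam) / s ^ (α : ℂ) := by
  have hs0 : s ≠ 0 := fun h => by simp [h] at hs
  have : s ^ (α : ℂ) ≠ 0 := by simp [Complex.cpow_eq_zero_iff, hs0]
  rw [Complex.cpow_neg]
  field_simp

/-- Powers of the right half-plane keep a positive distance from a point outside the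
corresponding closed sector. -/
lemma exists_le_norm_cpow_sub {α : ℝ} (hα0 : 0 < α) (hα1 : α < 1) {lam : ℂ}
    (hlam : α * π / 2 < |Complex.arg lam|) :
    ∃ c > 0, ∀ s : ℂ, 0 < s.re →
      c ≤ ‖s ^ (α : ℂ) - lam‖ ∧ c * ‖s‖ ^ α ≤ ‖s ^ (α : ℂ) - lam‖ := by
  have hθ : 0 < α * π / 2 := by positivity
  set S : Set ℂ := {z | ‖z‖ * cos (α * π / 2) ≤ z.re} with hS
  have hSc : IsClosed S := isClosed_le (by fun_prop) Complex.continuous_re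
  have hlam0 : lam ≠ 0 := by
    rintro rfl
    simp at hlam
    linarith
  have hlamS : lam ∉ S := by
    rw [hS, mem_ofPred_eq, not_le, ← Complex.norm_mul_cos_arg, ← Real.cos_abs (Complex.arg lam)]
    have := Real.cos_lt_cos_of_nonneg_of_le_pi hθ.le (Complex.abs_arg_le_pi lam) hlam
    have := norm_pos_iff.2 hlam0
    gcongr
  have hmem : ∀ s : ℂ, 0 < s.re → s ^ (α : ℂ) ∈ S := by
    intro s hs
    have hs0 : s ≠ 0 := fun h => by simp [h] at hs
    have harg : |Complex.arg s| < π / 2 := by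
      rw [Complex.abs_arg_lt_pi_div_two_iff]
      exact Or.inl hs
    have hnorm : ‖s ^ (α : ℂ)‖ = ‖s‖ ^ α := by
      rw [Complex.norm_cpow_of_ne_zero hs0]
      simp
    have hre : (s ^ (α : ℂ)).re = ‖s‖ ^ α * cos (|Complex.arg s| * α) := by
      rw [Complex.cpow_ofReal_re, ← Real.cos_abs, abs_mul, abs_of_pos hα0]
    rw [hS, mem_ofPred_eq, hnorm, hre]
    gcongr
    refine Real.cos_le_cos_of_nonneg_of_le_pi (by positivity) ?_ ?_
    · nlinarith [Real.pi_pos]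
    · nlinarith
  obtain ⟨r, hr, hball⟩ := Metric.isOpen_iff.1 hSc.isOpen_compl lam hlamS
  have hdist : ∀ s : ℂ, 0 < s.re → r ≤ ‖s ^ (α : ℂ) - lam‖ := by
    intro s hs
    by_contra! h
    exact hball (by rwa [Metric.mem_ball, dist_eq_norm]) (hmem s hs)
  have hL : 0 < ‖lam‖ := norm_pos_iff.2 hlam0
  refine ⟨min r (min (1 / 2) (r / (2 * ‖lam‖))), by positivity, fun s hs => ?_⟩
  refine ⟨(min_le_left _ _).trans (hdist s hs), ?_⟩
  have hs0 : s ≠ 0 := fun h => by simp [h] at hs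
  have hnorm : ‖s ^ (α : ℂ)‖ = ‖s‖ ^ α := by
    rw [Complex.norm_cpow_of_ne_zero hs0]
    simp
  rw [← hnorm]
  rcases le_total (2 * ‖lam‖) ‖s ^ (α : ℂ)‖ with h | h
  · have h1 := norm_sub_norm_le (s ^ (α : ℂ)) lam
    have h2 : min r (min (1 / 2) (r / (2 * ‖lam‖))) ≤ 1 / 2 :=
      (min_le_right _ _).trans (min_le_left _ _)
    nlinarith [norm_nonneg (s ^ (α : ℂ))]
  · have h2 : min r (min (1 / 2) (r / (2 * ‖lam‖))) ≤ r / (2 * ‖lam‖) :=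
      (min_le_right _ _).trans (min_le_right _ _)
    calc _ ≤ r / (2 * ‖lam‖) * (2 * ‖lam‖) := by gcongr
      _ = r := by field_simp
      _ ≤ _ := hdist s hs

lemma exists_norm_resolventDerivTwo_le {α : ℝ} (hα0 : 0 < α) (hα1 : α < 1) {lam : ℂ}
    (hlam : α * π / 2 < |Complex.arg lam|) :
    ∃ C, 0 ≤ C ∧ ∀ s : ℂ, 0 < s.re → ‖resolventDerivTwo α lam s‖ ≤ C * ‖s‖ ^ (-(2 - α)) := by
  obtain ⟨c, hc, hcs⟩ := exists_le_norm_cpow_sub hα0 hα1 hlam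
  have hα : 0 < 1 - α := by linarith
  refine ⟨2 * α ^ 2 / c ^ 3 + α * (1 - α) / c ^ 2, by positivity, fun s hs => ?_⟩
  obtain ⟨h1, h2⟩ := hcs s hs
  have hs0 : s ≠ 0 := fun h => by simp [h] at hs
  have hspos : 0 < ‖s‖ := norm_pos_iff.2 hs0
  have hnorm : ‖s ^ (α : ℂ)‖ = ‖s‖ ^ α := by
    rw [Complex.norm_cpow_of_ne_zero hs0]
    simp
  rw [resolventDerivTwo, norm_mul, norm_ofReal_cpow_neg hs, one_sub_mul_cpow_neg hs]
  set P := ‖s‖ ^ α with hP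
  set D := ‖s ^ (α : ℂ) - lam‖ with hD
  have hPpos : 0 < P := by positivity
  have hDpos : 0 < D := hc.trans_le h1
  have hPD : P / D ≤ 1 / c := by
    rw [div_le_div_iff₀ hDpos hc]
    linarith
  have hD1 : 1 / D ≤ 1 / c := one_div_le_one_div_of_le hc h1
  have hb : ‖2 * (α : ℂ) ^ 2 / ((s ^ (α : ℂ) - lam) / s ^ (α : ℂ)) ^ 3
      + α * (1 - α) / ((s ^ (α : ℂ) - lam) / s ^ (α : ℂ)) ^ 2‖
      ≤ (2 * α ^ 2 / c ^ 3 + α * (1 - α) / c ^ 2) * P ^ 2 := by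
    refine (norm_add_le _ _).trans ?_
    have hn1 : ‖(1 : ℂ) - α‖ = 1 - α := by
      rw [← Complex.ofReal_one, ← Complex.ofReal_sub, Complex.norm_real,
        Real.norm_of_nonneg hα.le]
    simp only [norm_div, norm_mul, norm_pow, hnorm, ← hD, hn1, Complex.norm_real,
      Real.norm_of_nonneg hα0.le, Complex.norm_ofNat]
    have e1 : 2 * α ^ 2 / (D / P) ^ 3 = 2 * α ^ 2 * ((1 / D) ^ 2 * (P / D)) * P ^ 2 := by
      field_simp
    have e2 : α * (1 - α) / (D / P) ^ 2 = α * (1 - α) * (1 / D) ^ 2 * P ^ 2 := by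
      field_simp
    rw [e1, e2]
    calc _ ≤ 2 * α ^ 2 * ((1 / c) ^ 2 * (1 / c)) * P ^ 2
          + α * (1 - α) * (1 / c) ^ 2 * P ^ 2 := by gcongr
      _ = _ := by field_simp
  calc _ ≤ ‖s‖ ^ (-(α + 2)) * ((2 * α ^ 2 / c ^ 3 + α * (1 - α) / c ^ 2) * P ^ 2) := by gcongr
    _ = (2 * α ^ 2 / c ^ 3 + α * (1 - α) / c ^ 2) * (‖s‖ ^ (-(α + 2)) * P ^ 2) := by ring
    _ = _ := by
      rw [hP, ← Real.rpow_mul_natCast hspos.le, ← Real.rpow_add hspos]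
      congr 2
      push_cast
      ring

lemma differentiableOn_resolventDerivTwo {α : ℝ} (hα0 : 0 < α) (hα1 : α < 1) {lam : ℂ}
    (hlam : α * π / 2 < |Complex.arg lam|) :
    DifferentiableOn ℂ (resolventDerivTwo α lam) {s | 0 < s.re} := by
  obtain ⟨c, hc, hcs⟩ := exists_le_norm_cpow_sub hα0 hα1 hlam
  intro s hs
  have hs0 : s ≠ 0 := fun h => by simp [h] at hs
  have hpow : ∀ b : ℂ, DifferentiableAt ℂ (fun s : ℂ => s ^ b) s := fun b =>
    differentiableAt_id.cpow_const (Or.inl hs)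
  have hne : 1 - lam * s ^ (-(α : ℂ)) ≠ 0 := by
    rw [one_sub_mul_cpow_neg hs]
    refine div_ne_zero (norm_pos_iff.1 (hc.trans_le (hcs s hs).1)) ?_
    simp [Complex.cpow_eq_zero_iff, hs0]
  have hd : DifferentiableAt ℂ (fun s : ℂ => 1 - lam * s ^ (-(α : ℂ))) s :=
    ((hpow _).const_mul _).const_sub _
  unfold resolventDerivTwo
  exact ((hpow _).mul (((differentiableAt_const _).div (hd.pow 3) (pow_ne_zero 3 hne)).add
    ((differentiableAt_const _).div (hd.pow 2) (pow_ne_zero 2 hne)))).differentiableWithinAt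

/-- A holomorphic function decaying on a vertical strip has the same integral along all
vertical lines of the strip. -/
lemma integral_verticalLine_eq_of_norm_le {H : ℂ → ℂ} (hH : DifferentiableOn ℂ H {s | 0 < s.re})
    {σ₁ σ₂ : ℝ} (hσ₁ : 0 < σ₁) (hσ : σ₁ ≤ σ₂) {M b : ℝ} (hb : 1 < b)
    (hM : ∀ s : ℂ, σ₁ ≤ s.re → s.re ≤ σ₂ → ‖H s‖ ≤ M * ‖s‖ ^ (-b)) :
    ∫ y : ℝ, H ((σ₁ : ℂ) + y * Complex.I) = ∫ y : ℝ, H ((σ₂ : ℂ) + y * Complex.I) := by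
  have hM0 : 0 ≤ M := by
    have h := (norm_nonneg _).trans (hM σ₁ (by simp) (by simpa))
    have : 0 < ‖(σ₁ : ℂ)‖ ^ (-b) := by
      have : (σ₁ : ℂ) ≠ 0 := by exact_mod_cast hσ₁.ne'
      positivity
    exact nonneg_of_mul_nonneg_left h this
  have hint : ∀ σ, σ₁ ≤ σ → σ ≤ σ₂ → Integrable fun y : ℝ => H ((σ : ℂ) + y * Complex.I) := by
    intro σ h1 h2
    have hσ0 : 0 < σ := hσ₁.trans_le h1
    refine ((integrable_norm_verticalLine_rpow hσ0 hb).const_mul M).mono' ?_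
      (Filter.Eventually.of_forall fun y => hM _ (by simpa) (by simpa))
    refine Continuous.aestronglyMeasurable (hH.continuousOn.comp_continuous (by fun_prop) ?_)
    exact fun y => verticalLine_re_pos hσ0 y
  have hhor : ∀ (f : ℝ → ℝ), (∀ T, |f T| = |T|) → Filter.Tendsto
      (fun T : ℝ => ∫ x in σ₁..σ₂, H ((x : ℂ) + (f T : ℂ) * Complex.I)) Filter.atTop (nhds 0) := by
    intro f hf
    have hlim : Filter.Tendsto (fun T : ℝ => M * T ^ (-b) * |σ₂ - σ₁|) Filter.atTop (nhds 0) := by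
      have := ((tendsto_rpow_neg_atTop (by linarith : 0 < b)).const_mul M).mul_const |σ₂ - σ₁|
      simpa using this
    refine squeeze_zero_norm' ?_ hlim
    filter_upwards [Filter.eventually_gt_atTop 0] with T hT
    refine intervalIntegral.norm_integral_le_of_norm_le_const fun x hx => ?_
    rw [uIoc_of_le hσ] at hx
    refine (hM _ (by simpa using hx.1.le) (by simpa using hx.2)).trans ?_
    gcongr ?_ * ?_
    refine Real.rpow_le_rpow_of_nonpos hT ?_ (by linarith)
    have := (le_norm_verticalLine (hσ₁.trans hx.1) (f T)).2
    rwa [hf, abs_of_pos hT] at this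
  have hrect : ∀ T : ℝ, (∫ x in σ₁..σ₂, H ((x : ℂ) + ((-T : ℝ) : ℂ) * Complex.I))
      - (∫ x in σ₁..σ₂, H ((x : ℂ) + (T : ℂ) * Complex.I))
      + Complex.I • (∫ y in (-T)..T, H ((σ₂ : ℂ) + y * Complex.I))
      - Complex.I • (∫ y in (-T)..T, H ((σ₁ : ℂ) + y * Complex.I)) = 0 := by
    intro T
    have := Complex.integral_boundary_rect_eq_zero_of_differentiableOn H ⟨σ₁, -T⟩ ⟨σ₂, T⟩
      (hH.mono fun s hs => by
        have := (Complex.mem_reProdIm.1 hs).1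
        rw [uIcc_of_le hσ] at this
        exact hσ₁.trans_le this.1)
    exact this
  have hlim := (((hhor (fun T => -T) (by simp)).sub (hhor id (by simp))).add
    ((intervalIntegral_tendsto_integral (hint σ₂ hσ le_rfl) Filter.tendsto_neg_atTop_atBot
      Filter.tendsto_id).const_smul Complex.I)).sub
    ((intervalIntegral_tendsto_integral (hint σ₁ le_rfl hσ) Filter.tendsto_neg_atTop_atBot
      Filter.tendsto_id).const_smul Complex.I)
  have h0 := tendsto_nhds_unique hlim ((Filter.tendsto_congr hrect).2 tendsto_const_nhds)
  simp only [sub_zero, zero_add, ← smul_sub, smul_eq_zero, Complex.I_ne_zero, false_or,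
    sub_eq_zero] at h0
  exact h0.symm

lemma summable_mittagLeffler {α : ℝ} (hα : 0 < α) (z : ℂ) :
    Summable fun k : ℕ => z ^ k / (Real.Gamma (k * α + α) : ℂ) := by
  have hbase : 0 ≤ ‖z‖ + 1 := by positivity
  have h := hasSum_integral_verticalLine_resolventDerivTwo hα (lam := z)
    (σ := (‖z‖ + 1) ^ α⁻¹) (by positivity)
    (by rw [← Real.rpow_mul hbase, inv_mul_cancel₀ hα.ne', Real.rpow_one]; linarith) one_pos
  simp only [Real.one_rpow, Complex.ofReal_one, mul_one] at h
  exact (summable_mul_left_iff (by norm_num [Real.pi_ne_zero])).1 h.summable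

lemma norm_mittagLeffler_term_le (α : ℝ) {z : ℂ} {R : ℝ} (hz : ‖z‖ ≤ R) (k : ℕ) :
    ‖z ^ k / (Real.Gamma (k * α + α) : ℂ)‖ ≤ ‖(R : ℂ) ^ k / (Real.Gamma (k * α + α) : ℂ)‖ := by
  simp only [norm_div, norm_pow, Complex.norm_real]
  gcongr
  exact hz.trans (le_abs_self R)

lemma continuous_mittagLeffler {α : ℝ} (hα : 0 < α) : Continuous (mittagLeffler α α) := by
  refine continuous_iff_continuousAt.2 fun z => ?_
  have : ContinuousOn (mittagLeffler α α) (Metric.closedBall 0 (‖z‖ + 1)) :=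
    continuousOn_tsum (fun k => by fun_prop)
      (summable_mittagLeffler hα ((‖z‖ + 1 : ℝ) : ℂ)).norm
      fun k x hx => norm_mittagLeffler_term_le α (by simpa using hx) k
  refine this.continuousAt (Filter.mem_of_superset (Metric.ball_mem_nhds z one_pos) fun x hx => ?_)
  rw [Metric.mem_ball, dist_eq_norm] at hx
  rw [mem_closedBall_zero_iff]
  linarith [norm_sub_norm_le x z]

/-- The Mittag-Leffler kernel `u ^ (α - 1) E_{α,α}(lam u ^ α)`. -/
noncomputable def mittagLefflerKernel (α : ℝ) (lam : ℂ) (u : ℝ) : ℂ :=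
  ((u ^ (α - 1) : ℝ) : ℂ) * mittagLeffler α α (lam * ((u ^ α : ℝ) : ℂ))

lemma norm_integral_verticalLine_le {G : ℂ → ℂ} {C b : ℝ}
    (hb : 1 < b) (hG : ∀ s : ℂ, 0 < s.re → ‖G s‖ ≤ C * ‖s‖ ^ (-b)) {u : ℝ} (hu : 0 < u) :
    ‖∫ y : ℝ, Complex.exp (((u⁻¹ : ℝ) + y * Complex.I) * u) * G ((u⁻¹ : ℝ) + y * Complex.I)‖
      ≤ (rexp 1 * C * ∫ y : ℝ, ‖((1 : ℝ) : ℂ) + y * Complex.I‖ ^ (-b)) * u ^ (b - 1) := by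
  have hui : 0 < u⁻¹ := inv_pos.2 hu
  have hint := integrable_norm_verticalLine_rpow hui hb
  calc _ ≤ ∫ y : ℝ, rexp 1 * C * ‖((u⁻¹ : ℝ) : ℂ) + y * Complex.I‖ ^ (-b) := by
        refine norm_integral_le_of_norm_le (hint.const_mul _)
          (Filter.Eventually.of_forall fun y => ?_)
        rw [norm_mul, Complex.norm_exp, mul_assoc]
        refine mul_le_mul (le_of_eq ?_) (hG _ (verticalLine_re_pos hui y)) (norm_nonneg _)
          (Real.exp_pos _).le
        simp [hu.ne']
    _ = rexp 1 * C * ∫ y : ℝ, ‖((u⁻¹ : ℝ) : ℂ) + y * Complex.I‖ ^ (-b) := by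
        rw [integral_const_mul]
    _ = _ := by
        have hsub := Measure.integral_comp_mul_left
          (fun y : ℝ => ‖((u⁻¹ : ℝ) : ℂ) + y * Complex.I‖ ^ (-b)) u⁻¹
        have hfun : ∀ y : ℝ, ‖((u⁻¹ : ℝ) : ℂ) + (u⁻¹ * y : ℝ) * Complex.I‖ ^ (-b)
            = u ^ b * ‖((1 : ℝ) : ℂ) + y * Complex.I‖ ^ (-b) := by
          intro y
          rw [show ((u⁻¹ : ℝ) : ℂ) + (u⁻¹ * y : ℝ) * Complex.I
            = ((u⁻¹ : ℝ) : ℂ) * (((1 : ℝ) : ℂ) + y * Complex.I) by push_cast; ring, norm_mul,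
            Real.mul_rpow (norm_nonneg _) (norm_nonneg _), Complex.norm_real,
            Real.norm_of_nonneg hui.le, Real.rpow_neg hui.le, Real.inv_rpow hu.le, inv_inv]
        simp only [hfun] at hsub
        rw [integral_const_mul, inv_inv, abs_of_pos hu, smul_eq_mul] at hsub
        have hI : ∫ y : ℝ, ‖((u⁻¹ : ℝ) : ℂ) + y * Complex.I‖ ^ (-b)
            = u⁻¹ * (u ^ b * ∫ y : ℝ, ‖((1 : ℝ) : ℂ) + y * Complex.I‖ ^ (-b)) := by
          rw [hsub, inv_mul_cancel_left₀ hu.ne']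
        rw [Real.rpow_sub_one hu.ne', hI]
        ring

/-- In the stability sector the Mittag-Leffler kernel decays like `u ^ (-1 - α)`. -/
lemma exists_norm_mittagLefflerKernel_le {α : ℝ} (hα0 : 0 < α) (hα1 : α < 1) {lam : ℂ}
    (hlam : α * π / 2 < |Complex.arg lam|) :
    ∃ K, ∀ u : ℝ, 1 ≤ u → ‖mittagLefflerKernel α lam u‖ ≤ K * u ^ (-1 - α) := by
  obtain ⟨C, hC, hG⟩ := exists_norm_resolventDerivTwo_le hα0 hα1 hlam
  have hdiff := differentiableOn_resolventDerivTwo hα0 hα1 hlam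
  set A := ∫ y : ℝ, ‖((1 : ℝ) : ℂ) + y * Complex.I‖ ^ (-(2 - α)) with hA
  refine ⟨(2 * π)⁻¹ * (rexp 1 * C * A), fun u hu => ?_⟩
  have hu0 : 0 < u := by linarith
  have hbase : 1 ≤ ‖lam‖ + 1 := by linarith [norm_nonneg lam]
  set σ := (‖lam‖ + 1) ^ α⁻¹ with hσ
  have hσ1 : 1 ≤ σ := Real.one_le_rpow hbase (by positivity)
  have hσlam : ‖lam‖ < σ ^ α := by
    rw [hσ, ← Real.rpow_mul (by linarith), inv_mul_cancel₀ hα0.ne', Real.rpow_one]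
    linarith
  have hsum := hasSum_integral_verticalLine_resolventDerivTwo hα0 (by linarith : 0 < σ) hσlam hu0
  have hker : (2 * π * u ^ 2 : ℝ) * mittagLefflerKernel α lam u
      = ∫ y : ℝ, Complex.exp (((σ : ℂ) + y * Complex.I) * u)
        * resolventDerivTwo α lam ((σ : ℂ) + y * Complex.I) := by
    rw [← hsum.tsum_eq, tsum_mul_left, mittagLefflerKernel, mittagLeffler, ← mul_assoc]
    congr 1
    rw [Real.rpow_sub_one hu0.ne']
    have : (u : ℂ) ≠ 0 := by exact_mod_cast hu0.ne'
    push_cast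
    field_simp
  have hshift := integral_verticalLine_eq_of_norm_le
    (H := fun s => Complex.exp (s * u) * resolventDerivTwo α lam s)
    (by
      intro s hs
      exact (DifferentiableAt.differentiableWithinAt (by fun_prop)).mul (hdiff s hs))
    (inv_pos.2 hu0) ((inv_le_one_of_one_le₀ hu).trans hσ1) (M := rexp (σ * u) * C) (b := 2 - α)
    (by linarith)
    (by
      intro s h1 h2
      rw [norm_mul, Complex.norm_exp, mul_assoc]
      refine mul_le_mul ?_ (hG s ((inv_pos.2 hu0).trans_le h1)) (norm_nonneg _) (Real.exp_pos _).le
      simp only [Complex.mul_re, Complex.ofReal_re, Complex.ofReal_im, mul_zero, sub_zero]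
      gcongr)
  have hle := norm_integral_verticalLine_le (by linarith : 1 < 2 - α) hG hu0
  rw [hshift, ← hker, norm_mul, Complex.norm_real, Real.norm_of_nonneg (by positivity)] at hle
  have hpow : u ^ (-1 - α) * u ^ 2 = u ^ (2 - α - 1) := by
    rw [← Real.rpow_natCast, ← Real.rpow_add hu0]
    congr 1
    push_cast
    ring
  rw [← hpow, ← hA] at hle
  have hu2 : 0 < u ^ 2 := by positivity
  have h2π : 0 < 2 * π := by positivity
  refine le_of_mul_le_mul_left (hle.trans (le_of_eq ?_)) (mul_pos h2π hu2)
  field_simp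

lemma integrableOn_mittagLefflerKernel {α : ℝ} (hα0 : 0 < α) (hα1 : α < 1) {lam : ℂ}
    (hlam : α * π / 2 < |Complex.arg lam|) :
    IntegrableOn (mittagLefflerKernel α lam) (Ioi 0) := by
  obtain ⟨K, hK⟩ := exists_norm_mittagLefflerKernel_le hα0 hα1 hlam
  have hE : Continuous fun u : ℝ => mittagLeffler α α (lam * ((u ^ α : ℝ) : ℂ)) :=
    (continuous_mittagLeffler hα0).comp (continuous_const.mul
      (Complex.continuous_ofReal.comp (Real.continuous_rpow_const hα0.le)))
  have hmeas : Measurable (mittagLefflerKernel α lam) := by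
    unfold mittagLefflerKernel
    exact Measurable.mul (by fun_prop) hE.measurable
  rw [← Ioc_union_Ioi_eq_Ioi zero_le_one]
  refine IntegrableOn.union ?_ ?_
  · obtain ⟨B, hB⟩ := isCompact_Icc.exists_bound_of_continuousOn (s := Icc (0 : ℝ) 1) hE.continuousOn
    have hr : IntegrableOn (fun u : ℝ => u ^ (α - 1)) (Ioc 0 1) :=
      (intervalIntegrable_iff_integrableOn_Ioc_of_le zero_le_one).1
        (intervalIntegral.intervalIntegrable_rpow' (by linarith))
    refine (hr.mul_const B).mono' hmeas.aestronglyMeasurable ?_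
    filter_upwards [ae_restrict_mem measurableSet_Ioc] with u hu
    rw [mittagLefflerKernel, norm_mul, Complex.norm_real,
      Real.norm_of_nonneg (Real.rpow_nonneg hu.1.le _)]
    gcongr
    · exact Real.rpow_nonneg hu.1.le _
    · exact hB u ⟨hu.1.le, hu.2⟩
  · refine ((integrableOn_Ioi_rpow_of_lt (a := -1 - α) (by linarith) one_pos).const_mul K).mono'
      hmeas.aestronglyMeasurable ?_
    filter_upwards [ae_restrict_mem measurableSet_Ioi] with u hu
    exact hK u (le_of_lt hu)

/-- Change of variables `u = (t ^ ρ - s ^ ρ) / ρ` in a kernel integrable on the half-line. -/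
lemma integrableOn_comp_rpow_sub {κ : ℝ → ℂ} (hκ : IntegrableOn κ (Ioi 0)) {ρ t₀ t : ℝ}
    (hρ : 0 < ρ) (ht₀ : 0 < t₀) :
    IntegrableOn (fun s => κ ((t ^ ρ - s ^ ρ) / ρ) * ((s ^ (ρ - 1) : ℝ) : ℂ)) (Ioc t₀ t) ∧
      ∫ s in Ioc t₀ t, ‖κ ((t ^ ρ - s ^ ρ) / ρ) * ((s ^ (ρ - 1) : ℝ) : ℂ)‖
        ≤ ∫ u in Ioi (0 : ℝ), ‖κ u‖ := by
  set g : ℝ → ℝ := fun s => (t ^ ρ - s ^ ρ) / ρ with hg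
  have hpos : ∀ s ∈ Ioo t₀ t, 0 < s := fun s hs => ht₀.trans hs.1
  have hderiv : ∀ s ∈ Ioo t₀ t, HasDerivWithinAt g (-s ^ (ρ - 1)) (Ioo t₀ t) s := by
    intro s hs
    have h := ((Real.hasDerivAt_rpow_const (p := ρ) (Or.inl (hpos s hs).ne')).const_sub
      (t ^ ρ)).div_const ρ
    convert! h.hasDerivWithinAt using 1
    field_simp
  have hinj : InjOn g (Ioo t₀ t) := by
    intro x hx y hy hxy
    simp only [hg, div_left_inj' hρ.ne', sub_right_inj] at hxy
    exact (Real.rpow_left_inj (hpos x hx).le (hpos y hy).le hρ.ne').1 hxy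
  have himage : g '' Ioo t₀ t ⊆ Ioi 0 := by
    rintro _ ⟨s, hs, rfl⟩
    exact div_pos (sub_pos.2 (Real.rpow_lt_rpow (hpos s hs).le hs.2 hρ)) hρ
  have hnorm : ∀ s ∈ Ioo t₀ t, ‖κ (g s) * ((s ^ (ρ - 1) : ℝ) : ℂ)‖
      = |-s ^ (ρ - 1)| • ‖κ (g s)‖ := by
    intro s hs
    rw [norm_mul, Complex.norm_real, abs_neg, smul_eq_mul, mul_comm, Real.norm_eq_abs]
  rw [integrableOn_Ioc_iff_integrableOn_Ioo, integral_Ioc_eq_integral_Ioo,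
    setIntegral_congr_fun measurableSet_Ioo hnorm,
    ← integral_image_eq_integral_abs_deriv_smul measurableSet_Ioo hderiv hinj fun u => ‖κ u‖]
  refine ⟨?_, setIntegral_mono_set hκ.norm (Filter.Eventually.of_forall fun u => norm_nonneg _)
    himage.eventuallyLE⟩
  refine ((integrableOn_image_iff_integrableOn_abs_deriv_smul measurableSet_Ioo hderiv hinj κ).1
    (hκ.mono_set himage)).congr_fun (fun s hs => ?_) measurableSet_Ioo
  simp only
  rw [abs_neg, abs_of_pos (Real.rpow_pos_of_pos (hpos s hs) _), Complex.real_smul, mul_comm]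

lemma norm_le_supNorm {E : Type*} [NormedAddCommGroup E] {t₀ : ℝ} {ξ : ℝ → E}
    (hξ : ∃ M, ∀ t ≥ t₀, ‖ξ t‖ ≤ M) {t : ℝ} (ht : t₀ ≤ t) : ‖ξ t‖ ≤ supNorm t₀ ξ := by
  obtain ⟨M, hM⟩ := hξ
  exact le_ciSup (f := fun t : Set.Ici t₀ => ‖ξ t.1‖)
    ⟨M, by rintro _ ⟨s, rfl⟩; exact hM s.1 s.2⟩ ⟨t, ht⟩

lemma supNorm_nonneg {E : Type*} [NormedAddCommGroup E] (t₀ : ℝ) (ξ : ℝ → E) :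
    0 ≤ supNorm t₀ ξ :=
  Real.iSup_nonneg fun _ => norm_nonneg _

lemma lipQuot_nonneg {E : Type*} [NormedAddCommGroup E] (h : E → E) (r : ℝ) :
    0 ≤ lipQuot h r :=
  Real.iSup_nonneg fun _ => by positivity

lemma LocallyLipschitz.norm_sub_le_lipQuot {E : Type*} [NormedAddCommGroup E] [ProperSpace E]
    {h : E → E} (hh : LocallyLipschitz h) {r : ℝ} {x y : E} (hx : ‖x‖ ≤ r) (hy : ‖y‖ ≤ r) :
    ‖h x - h y‖ ≤ lipQuot h r * ‖x - y‖ := by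
  obtain ⟨K, hK⟩ := LocallyLipschitzOn.exists_lipschitzOnWith_of_compact
    (isCompact_closedBall (0 : E) r) hh.locallyLipschitzOn
  have hbdd : BddAbove (range fun q : { q : E × E // ‖q.1‖ ≤ r ∧ ‖q.2‖ ≤ r } =>
      ‖h q.1.1 - h q.1.2‖ / ‖q.1.1 - q.1.2‖) := by
    refine ⟨K, ?_⟩
    rintro _ ⟨⟨⟨a, b⟩, ha, hb⟩, rfl⟩
    refine div_le_of_le_mul₀ (norm_nonneg _) K.2 ?_
    exact hK.norm_sub_le (by simpa using ha) (by simpa using hb)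
  rcases eq_or_ne x y with rfl | hxy
  · simp
  · rw [← div_le_iff₀ (norm_pos_iff.2 (sub_ne_zero.2 hxy))]
    exact le_ciSup hbdd ⟨(x, y), hx, hy⟩

lemma integrableOn_kernel_mul {k f : ℝ → ℂ} {t₀ t M : ℝ} (hk : IntegrableOn k (Ioc t₀ t))
    (hf : ContinuousOn f (Ici t₀)) (hM : ∀ s, t₀ ≤ s → ‖f s‖ ≤ M) :
    IntegrableOn (fun s => k s * f s) (Ioc t₀ t) := by
  have hsub : Ioc t₀ t ⊆ Ici t₀ := fun s hs => hs.1.le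
  refine Integrable.mul_bdd (c := M) hk
    ((hf.mono hsub).aestronglyMeasurable measurableSet_Ioc) ?_
  filter_upwards [ae_restrict_mem measurableSet_Ioc] with s hs
  exact hM s (hsub hs)

/-- The Lyapunov–Perron operator is Lipschitz on sup-norm balls: there is a constant
`C(α,λ) > 0`, depending only on `α` and `λ = (λ₁,...,λ_n)`, such that
`‖F_x ξ − F_x ξ̂‖_∞ ≤ C(α,λ) ℓ_h(max(‖ξ‖_∞, ‖ξ̂‖_∞)) ‖ξ − ξ̂‖_∞`. -/
theorem lyapunovPerron_lipschitz (α : ℝ) (hα0 : 0 < α) (hα1 : α < 1)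
    (n : ℕ) (hn : 0 < n) (lam : Fin n → ℂ)
    (hlam : ∀ i, α * Real.pi / 2 < |Complex.arg (lam i)|) :
    ∃ C > (0 : ℝ), ∀ ρ t₀ : ℝ, 0 < ρ → 0 < t₀ →
      ∀ d : Fin n → ℕ, (∀ i, 1 ≤ d i) →
      ∀ h : (((i : Fin n) × Fin (d i)) → ℂ) → (((i : Fin n) × Fin (d i)) → ℂ),
        LocallyLipschitz h → h 0 = 0 →
      ∀ (x : ((i : Fin n) × Fin (d i)) → ℂ)
        (ξ ξ' : ℝ → ((i : Fin n) × Fin (d i)) → ℂ),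
        ContinuousOn ξ (Set.Ici t₀) → (∃ M, ∀ t ≥ t₀, ‖ξ t‖ ≤ M) →
        ContinuousOn ξ' (Set.Ici t₀) → (∃ M, ∀ t ≥ t₀, ‖ξ' t‖ ≤ M) →
        supNorm t₀ (fun t => lyapunovPerron α ρ t₀ lam h x ξ t
            - lyapunovPerron α ρ t₀ lam h x ξ' t)
          ≤ C * lipQuot h (max (supNorm t₀ ξ) (supNorm t₀ ξ'))
              * supNorm t₀ (fun t => ξ t - ξ' t) := by
  have hκ : ∀ i, IntegrableOn (mittagLefflerKernel α (lam i)) (Ioi 0) := fun i =>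
    integrableOn_mittagLefflerKernel hα0 hα1 (hlam i)
  set K : Fin n → ℝ := fun i => ∫ u in Ioi (0 : ℝ), ‖mittagLefflerKernel α (lam i) u‖ with hK
  have hK0 : ∀ i, 0 ≤ K i := fun i => integral_nonneg fun u => norm_nonneg _
  have hKsum : ∀ i, K i ≤ 1 + ∑ j, K j := fun i =>
    (Finset.single_le_sum (fun j _ => hK0 j) (Finset.mem_univ i)).trans (by linarith)
  have hC : 0 < 1 + ∑ j, K j := by linarith [Finset.sum_nonneg fun j (_ : j ∈ Finset.univ) => hK0 j]
  refine ⟨1 + ∑ j, K j, hC, ?_⟩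
  intro ρ t₀ hρ ht₀ d _ h hh _ x ξ ξ' hξc hξb hξc' hξb'
  set r := max (supNorm t₀ ξ) (supNorm t₀ ξ')
  have hξr : ∀ s, t₀ ≤ s → ‖ξ s‖ ≤ r := fun s hs =>
    (norm_le_supNorm hξb hs).trans (le_max_left _ _)
  have hξr' : ∀ s, t₀ ≤ s → ‖ξ' s‖ ≤ r := fun s hs =>
    (norm_le_supNorm hξb' hs).trans (le_max_right _ _)
  have hdb : ∃ M, ∀ t ≥ t₀, ‖ξ t - ξ' t‖ ≤ M :=
    ⟨r + r, fun t ht => (norm_sub_le _ _).trans (add_le_add (hξr t ht) (hξr' t ht))⟩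
  have hL0 := lipQuot_nonneg h r
  have hD0 := supNorm_nonneg t₀ (fun t => ξ t - ξ' t)
  obtain ⟨B, hB⟩ := (isCompact_closedBall (0 : ((i : Fin n) × Fin (d i)) → ℂ) r)
    |>.exists_bound_of_continuousOn hh.continuous.continuousOn
  have : Nonempty (Set.Ici t₀) := ⟨⟨t₀, self_mem_Ici⟩⟩
  refine ciSup_le fun t => (pi_norm_le_iff_of_nonneg (by positivity)).2 fun p => ?_
  obtain ⟨t, ht : t₀ ≤ t⟩ := t
  obtain ⟨hk, hkK⟩ := integrableOn_comp_rpow_sub (hκ p.1) (t := t) hρ ht₀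
  set k : ℝ → ℂ := fun s => mittagLefflerKernel α (lam p.1) ((t ^ ρ - s ^ ρ) / ρ)
    * ((s ^ (ρ - 1) : ℝ) : ℂ) with hkdef
  have hcomp : ∀ η : ℝ → ((i : Fin n) × Fin (d i)) → ℂ, ContinuousOn η (Set.Ici t₀) →
      (∀ s, t₀ ≤ s → ‖η s‖ ≤ r) → IntegrableOn (fun s => k s * h (η s) p) (Ioc t₀ t) :=
    fun η hη hηr => integrableOn_kernel_mul hk
      ((continuous_apply p).comp_continuousOn (hh.continuous.comp_continuousOn hη))
      fun s hs => (norm_le_pi_norm _ p).trans (hB _ (by simpa using hηr s hs))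
  have hdiff : lyapunovPerron α ρ t₀ lam h x ξ t p - lyapunovPerron α ρ t₀ lam h x ξ' t p
      = ∫ s in Ioc t₀ t, k s * (h (ξ s) p - h (ξ' s) p) := by
    simp only [mul_sub]
    rw [integral_sub (hcomp ξ hξc hξr) (hcomp ξ' hξc' hξr')]
    simp only [lyapunovPerron, intervalIntegral.integral_of_le ht, add_sub_add_left_eq_sub, hkdef,
      mittagLefflerKernel]
  change ‖lyapunovPerron α ρ t₀ lam h x ξ t p - lyapunovPerron α ρ t₀ lam h x ξ' t p‖ ≤ _
  rw [hdiff]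
  calc _ ≤ ∫ s in Ioc t₀ t, ‖k s‖ * (lipQuot h r * supNorm t₀ (fun t => ξ t - ξ' t)) := by
        refine norm_integral_le_of_norm_le (hk.norm.mul_const _) ?_
        filter_upwards [ae_restrict_mem measurableSet_Ioc] with s hs
        rw [norm_mul]
        gcongr
        calc _ ≤ ‖h (ξ s) - h (ξ' s)‖ := norm_le_pi_norm (h (ξ s) - h (ξ' s)) p
          _ ≤ lipQuot h r * ‖ξ s - ξ' s‖ :=
            hh.norm_sub_le_lipQuot (hξr s hs.1.le) (hξr' s hs.1.le)
          _ ≤ _ := by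
            gcongr
            exact norm_le_supNorm (ξ := fun t => ξ t - ξ' t) hdb hs.1.le
    _ = (∫ s in Ioc t₀ t, ‖k s‖) * (lipQuot h r * supNorm t₀ (fun t => ξ t - ξ' t)) :=
        integral_mul_const _ _
    _ ≤ (1 + ∑ j, K j) * (lipQuot h r * supNorm t₀ (fun t => ξ t - ξ' t)) := by
        gcongr
        exact hkK.trans (hKsum p.1)
    _ = _ := (mul_assoc _ _ _).symm
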